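/- arXiv:2001.07181 — 4 statements merged into one kernel-verified Lean document; each statement's English description precedes it below -/
import Mathlib

section
/- Let A ∈ ℝ^{m×n}, let t be a positive integer, and let δ ∈ (0,1) be a restricted isometry constant of order t for A. Then for all vectors u, v ∈ ℝ^n with |supp(u) ∪ supp(v)| ≤ t, one has |⟨u, (I − AᵀA)v⟩| ≤ δ‖u‖₂‖v‖₂. -/
/-!
The quadratic form `Q x = ‖x‖² - ‖A x‖²` of `I - Aᵀ A` satisfies `|Q x| ≤ δ ‖x‖²` on `t`-sparse
vectors, which is the restricted isometry property rewritten. All combinations `a u ± b v` are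
supported in `supp u ∪ supp v`, hence `t`-sparse, so polarization together with the parallelogram
law gives `2 |a b ⟨u, (I - Aᵀ A) v⟩| ≤ δ (a² ‖u‖² + b² ‖v‖²)`. The choice `a = ‖v‖`, `b = ‖u‖`
balances the two terms and yields the bound after division by `2 ‖u‖ ‖v‖`.
-/

open Matrix Filter Topology

/-- Euclidean (ℓ₂) norm of a vector in ℝ^n. -/
noncomputable def norm2 {n : ℕ} (x : Fin n → ℝ) : ℝ := Real.sqrt (∑ i, x i ^ 2)

/-- Euclidean inner product. -/
def dot {n : ℕ} (u v : Fin n → ℝ) : ℝ := ∑ i, u i * v i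

/-- Support of a vector. -/
def supp {n : ℕ} (x : Fin n → ℝ) : Set (Fin n) := {i | x i ≠ 0}

/-- δ ∈ (0,1) is a restricted isometry constant of order q for A. -/
def IsRIC {m n : ℕ} (A : Matrix (Fin m) (Fin n) ℝ) (q : ℕ) (δ : ℝ) : Prop :=
  0 < δ ∧ δ < 1 ∧
    ∀ x : Fin n → ℝ, (supp x).ncard ≤ q →
      (1 - δ) * norm2 x ^ 2 ≤ norm2 (A.mulVec x) ^ 2 ∧
      norm2 (A.mulVec x) ^ 2 ≤ (1 + δ) * norm2 x ^ 2

/-- σ is the largest singular value (spectral norm) of A: it bounds ‖Av‖₂/‖v‖₂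
and this bound is attained. -/
def IsMaxSingularValue {m n : ℕ} (A : Matrix (Fin m) (Fin n) ℝ) (σ : ℝ) : Prop :=
  0 ≤ σ ∧ (∀ v : Fin n → ℝ, norm2 (A.mulVec v) ≤ σ * norm2 v) ∧
    ∃ v : Fin n → ℝ, v ≠ 0 ∧ norm2 (A.mulVec v) = σ * norm2 v

/-- For m ≤ n, σ is the smallest singular value of A, i.e. σ² is the smallest
eigenvalue of A Aᵀ: σ is the infimum of ‖Aᵀu‖₂/‖u‖₂ and it is attained. -/
def IsMinSingularValue {m n : ℕ} (A : Matrix (Fin m) (Fin n) ℝ) (σ : ℝ) : Prop :=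
  0 ≤ σ ∧ (∀ u : Fin m → ℝ, σ * norm2 u ≤ norm2 (Aᵀ.mulVec u)) ∧
    ∃ u : Fin m → ℝ, u ≠ 0 ∧ norm2 (Aᵀ.mulVec u) = σ * norm2 u

/-- w is a hard k-thresholding of z with associated index set S*. -/
def IsHardThresholding {n : ℕ} (k : ℕ) (z w : Fin n → ℝ) (S : Set (Fin n)) : Prop :=
  S.ncard = k ∧ (∀ i ∈ S, w i = z i) ∧ (∀ i ∉ S, w i = 0) ∧
    ∀ i ∈ S, ∀ j ∉ S, |z j| ≤ |z i|

theorem norm2_sq {n : ℕ} (x : Fin n → ℝ) : norm2 x ^ 2 = x ⬝ᵥ x := by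
  unfold norm2
  rw [Real.sq_sqrt (Finset.sum_nonneg fun i _ => sq_nonneg (x i))]
  simp [dotProduct, sq]

theorem dot_one_sub_gram {m n : ℕ} (A : Matrix (Fin m) (Fin n) ℝ) (u v : Fin n → ℝ) :
    dot u (((1 : Matrix (Fin n) (Fin n) ℝ) - Aᵀ * A).mulVec v)
      = u ⬝ᵥ v - A.mulVec u ⬝ᵥ A.mulVec v := by
  change u ⬝ᵥ _ = _
  rw [Matrix.sub_mulVec, Matrix.one_mulVec, dotProduct_sub, ← Matrix.mulVec_mulVec,
    Matrix.dotProduct_mulVec u, Matrix.vecMul_transpose]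

theorem supp_comb_ncard_le {n t : ℕ} {u v : Fin n → ℝ} (h : (supp u ∪ supp v).ncard ≤ t)
    (a b : ℝ) : (supp (a • u + b • v)).ncard ≤ t := by
  refine (Set.ncard_le_ncard ?_ (Set.toFinite _)).trans h
  intro i hi
  by_contra hc
  simp only [supp, Set.mem_union, Set.mem_ofPred_eq, not_or, not_not] at hc
  exact hi (by simp [hc.1, hc.2])

theorem eq_zero_of_norm2_eq_zero {n : ℕ} {x : Fin n → ℝ} (h : norm2 x = 0) : x = 0 := by
  have := norm2_sq x
  rw [h] at this
  exact dotProduct_self_eq_zero.mp (by linarith)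

/-- Lemma 3.1. -/
theorem stmt_0 {m n : ℕ} (A : Matrix (Fin m) (Fin n) ℝ)
    (t : ℕ) (ht : 0 < t) (δ : ℝ) (hδ : IsRIC A t δ)
    (u v : Fin n → ℝ) (hsupp : (supp u ∪ supp v).ncard ≤ t) :
    |dot u (((1 : Matrix (Fin n) (Fin n) ℝ) - Aᵀ * A).mulVec v)| ≤
      δ * norm2 u * norm2 v := by
  rw [dot_one_sub_gram]
  obtain ⟨-, -, hA⟩ := hδ
  have hu0 : 0 ≤ norm2 u := Real.sqrt_nonneg _
  have hv0 : 0 ≤ norm2 v := Real.sqrt_nonneg _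
  rcases hu0.eq_or_lt with hu | hu
  · simp [eq_zero_of_norm2_eq_zero hu.symm, norm2]
  rcases hv0.eq_or_lt with hv | hv
  · simp [eq_zero_of_norm2_eq_zero hv.symm, norm2]
  -- The weights give both scaled vectors the common length `‖u‖ ‖v‖`.
  have h1 := hA _ (supp_comb_ncard_le hsupp (norm2 v) (norm2 u))
  have h2 := hA _ (supp_comb_ncard_le hsupp (norm2 v) (-norm2 u))
  simp only [norm2_sq, Matrix.mulVec_add, Matrix.mulVec_smul, add_dotProduct, dotProduct_add,
    smul_dotProduct, dotProduct_smul, smul_eq_mul, dotProduct_comm v u,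
    dotProduct_comm (A.mulVec v) (A.mulVec u)] at h1 h2
  rw [← norm2_sq u, ← norm2_sq v] at h1 h2
  obtain ⟨h1l, h1u⟩ := h1
  obtain ⟨h2l, h2u⟩ := h2
  have hpos : 0 < norm2 u * norm2 v := mul_pos hu hv
  rw [abs_le]
  constructor
  · refine le_of_mul_le_mul_left ?_ hpos
    linarith
  · refine le_of_mul_le_mul_left ?_ hpos
    linarith
end

section
/- Let A ∈ ℝ^{m×n} with m ≤ n and A ≠ 0, with largest and smallest singular values σ₁ and σ_m. Let t be a positive integer and let δ ∈ (0,1) be a restricted isometry constant of order t for A. Suppose ε > σ₁² and λ ∈ ℝ satisfies 0 ≤ λ ≤ ε + σ_m². Then for every v ∈ ℝ^n and every index set Ω ⊆ {1,…,n} with |Ω ∪ supp(v)| ≤ t, one has ‖[(I − λ(AᵀA + εI)^{−1}AᵀA)v]_Ω‖₂ ≤ (δ + σ₁² − λσ₁²/(ε + σ₁²))‖v‖₂. -/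
/-!
Write `P = AᵀA`, `M = P + εI`, and split `I - λ M⁻¹P = (I - P) + C` with `C = P - λ M⁻¹P`.

* The form `b(x, y) = ⟨x, y⟩ - ⟨Ax, Ay⟩` satisfies `|b(x, x)| ≤ δ‖x‖²` on vectors supported in
  `Ω ∪ supp v`, so by polarization the vector `u = [(I - P)v]_Ω`, for which `‖u‖² = b(u, v)`,
  satisfies `‖u‖ ≤ δ‖v‖` (`ric_part`).
* `C` is diagonal in an orthonormal eigenbasis of `P`, with eigenvalues `f(s) = s - λs/(ε + s)`.
  Every eigenvalue `s` of `P` is at most `σ₁²`, and is either `0` or at least `σ_m²`. Since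
  `λ ≤ ε + σ_m²`, this gives `0 ≤ f(s) ≤ f(σ₁²)` (`filter_bound`), hence `‖Cv‖ ≤ f(σ₁²)‖v‖`
  (`spectral_part`).

The triangle inequality concludes.
-/

open Matrix Filter Topology

theorem norm2_eq_norm {n : ℕ} (x : Fin n → ℝ) : norm2 x = ‖WithLp.toLp 2 x‖ := by
  simp [norm2, EuclideanSpace.norm_eq]

theorem norm2_nonneg {n : ℕ} (x : Fin n → ℝ) : 0 ≤ norm2 x := Real.sqrt_nonneg _

theorem norm2_add_le {n : ℕ} (x y : Fin n → ℝ) : norm2 (x + y) ≤ norm2 x + norm2 y := by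
  simp only [norm2_eq_norm, WithLp.toLp_add]
  exact norm_add_le _ _

theorem norm2_indicator_le {n : ℕ} (Ω : Set (Fin n)) (x : Fin n → ℝ) :
    norm2 (Ω.indicator x) ≤ norm2 x := by
  classical
  refine Real.sqrt_le_sqrt (Finset.sum_le_sum fun i _ => ?_)
  by_cases h : i ∈ Ω
  · simp [h]
  · simpa [h] using sq_nonneg (x i)

theorem dot_mulVec {m n : ℕ} (A : Matrix (Fin m) (Fin n) ℝ) (x y : Fin n → ℝ) :
    (A *ᵥ x) ⬝ᵥ (A *ᵥ y) = x ⬝ᵥ ((Aᵀ * A) *ᵥ y) := by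
  rw [← Matrix.mulVec_mulVec, Matrix.dotProduct_mulVec x, Matrix.vecMul_transpose]

/-- The contribution of `I - AᵀA`, controlled by the restricted isometry constant. -/
theorem ric_part {m n : ℕ} (A : Matrix (Fin m) (Fin n) ℝ) (t : ℕ) (δ : ℝ) (hδ : IsRIC A t δ)
    (v : Fin n → ℝ) (Ω : Set (Fin n)) (hsupp : (Ω ∪ supp v).ncard ≤ t) :
    norm2 (Ω.indicator (v - (Aᵀ * A) *ᵥ v)) ≤ δ * norm2 v := by
  classical
  obtain ⟨hδ0, -, hric⟩ := hδ
  set u := Ω.indicator (v - (Aᵀ * A) *ᵥ v) with hu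
  have hmem : ∀ a : ℝ, (supp (u + a • v)).ncard ≤ t := fun a => by
    refine (Set.ncard_le_ncard ?_ (Set.toFinite _)).trans hsupp
    intro i hi
    by_contra hn
    simp only [Set.mem_union, not_or] at hn
    have hv : v i = 0 := by simpa [supp] using hn.2
    exact hi (by simp [hu, hn.1, hv])
  have huu : u ⬝ᵥ u = u ⬝ᵥ v - (A *ᵥ u) ⬝ᵥ (A *ᵥ v) := by
    rw [dot_mulVec, ← dotProduct_sub]
    simp only [dotProduct]
    refine Finset.sum_congr rfl fun i _ => ?_
    by_cases h : i ∈ Ω <;> simp [hu, h]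
  -- Polarization along `u ± δ v`: with the scale `δ` the two bounds combine to `‖u‖² ≤ δ²‖v‖²`.
  have h1 := (hric _ (hmem δ)).1
  have h2 := (hric _ (hmem (-δ))).2
  simp only [norm2_sq, Matrix.mulVec_add, Matrix.mulVec_smul, dotProduct_add, add_dotProduct,
    smul_dotProduct, dotProduct_smul, smul_eq_mul] at h1 h2
  rw [dotProduct_comm v u, dotProduct_comm (A *ᵥ v) (A *ᵥ u)] at h1 h2
  have key : δ * (u ⬝ᵥ u) ≤ δ * (δ ^ 2 * (v ⬝ᵥ v)) := by
    have h3 : δ * (u ⬝ᵥ u) = δ * (u ⬝ᵥ v) - δ * ((A *ᵥ u) ⬝ᵥ (A *ᵥ v)) := by rw [huu]; ring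
    nlinarith
  have key2 := le_of_mul_le_mul_left key hδ0
  refine abs_le_of_sq_le_sq' ?_ (mul_nonneg hδ0.le (norm2_nonneg v)) |>.2
  rw [mul_pow, norm2_sq, norm2_sq]
  exact key2

/-- The smallest singular value does not exceed the largest one; the degenerate case `σ1 = 0`
is left out. -/
theorem minSV_le_maxSV {m n : ℕ} (A : Matrix (Fin m) (Fin n) ℝ) (σ1 σm : ℝ)
    (hσ1 : IsMaxSingularValue A σ1) (hσm : IsMinSingularValue A σm) (h0 : 0 < σ1) :
    σm ^ 2 ≤ σ1 ^ 2 := by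
  obtain ⟨-, h1, -⟩ := hσ1
  obtain ⟨-, -, u, hu, hum⟩ := hσm
  set y := Aᵀ *ᵥ u with hy
  have hA : (A *ᵥ y) ⬝ᵥ (A *ᵥ y) ≤ σ1 ^ 2 * (y ⬝ᵥ y) := by
    rw [← norm2_sq, ← norm2_sq, ← mul_pow]
    exact pow_le_pow_left₀ (norm2_nonneg _) (h1 y) 2
  have hyy : u ⬝ᵥ (A *ᵥ y) = y ⬝ᵥ y := by
    rw [Matrix.dotProduct_mulVec, hy, Matrix.mulVec_transpose]
  have hym : y ⬝ᵥ y = σm ^ 2 * (u ⬝ᵥ u) := by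
    rw [← norm2_sq, ← norm2_sq, ← mul_pow, hum]
  have hupos : 0 < u ⬝ᵥ u := by
    have : 0 ≤ u ⬝ᵥ u := by rw [← norm2_sq]; positivity
    exact lt_of_le_of_ne this fun h => hu (dotProduct_self_eq_zero.1 h.symm)
  have hsq : 0 ≤ (A *ᵥ y - σ1 ^ 2 • u) ⬝ᵥ (A *ᵥ y - σ1 ^ 2 • u) := by
    rw [← norm2_sq]; positivity
  simp only [dotProduct_sub, sub_dotProduct, smul_dotProduct, dotProduct_smul,
    smul_eq_mul] at hsq
  rw [dotProduct_comm (A *ᵥ y) u, hyy] at hsq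
  have h4 : 0 ≤ (σ1 ^ 2 * (u ⬝ᵥ u)) * (σ1 ^ 2 - σm ^ 2) := by rw [hym] at hA hsq; nlinarith
  have h5 : 0 < σ1 ^ 2 * (u ⬝ᵥ u) := by positivity
  linarith [nonneg_of_mul_nonneg_right h4 h5]

/-- Bounds for `f(s) = s - λs/(ε + s)`; the upper one rests on
`f(S) - f(s) = (S - s)(1 - λε/((ε + S)(ε + s)))`. -/
theorem filter_bound {s S ε lam : ℝ} (hs : 0 ≤ s) (hsS : s ≤ S) (hε : 0 < ε)
    (hlam : lam ≤ ε + s) :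
    0 ≤ s - lam * s / (ε + s) ∧ s - lam * s / (ε + s) ≤ S - lam * S / (ε + S) := by
  have h1 : 0 < ε + s := by linarith
  have h2 : 0 < ε + S := by linarith
  constructor
  · have : s - lam * s / (ε + s) = s * (ε + s - lam) / (ε + s) := by field_simp
    rw [this]
    exact div_nonneg (mul_nonneg hs (by linarith)) h1.le
  · have : S - lam * S / (ε + S) - (s - lam * s / (ε + s))
        = (S - s) * ((ε + S) * (ε + s) - lam * ε) / ((ε + S) * (ε + s)) := by
      field_simp
      ring
    have h3 : 0 ≤ (S - s) * ((ε + S) * (ε + s) - lam * ε) / ((ε + S) * (ε + s)) := by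
      refine div_nonneg (mul_nonneg (by linarith) ?_) (by positivity)
      nlinarith [mul_nonneg (hs.trans hsS) h1.le]
    linarith

/-- If `x` is an eigenvector of `AᵀA` for `s ≠ 0`, then `Ax` is one of `AAᵀ`, so `s ≥ σ_m²`. -/
theorem eigen_bounds {m n : ℕ} (A : Matrix (Fin m) (Fin n) ℝ) (σ1 σm : ℝ)
    (hσ1 : IsMaxSingularValue A σ1) (hσm : IsMinSingularValue A σm) (x : Fin n → ℝ) (s : ℝ)
    (hx : x ⬝ᵥ x = 1) (hs : (Aᵀ * A) *ᵥ x = s • x) :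
    0 ≤ s ∧ s ≤ σ1 ^ 2 ∧ (s = 0 ∨ σm ^ 2 ≤ s) := by
  have hAx : (A *ᵥ x) ⬝ᵥ (A *ᵥ x) = s := by
    rw [dot_mulVec, hs, dotProduct_smul, hx, smul_eq_mul, mul_one]
  have hs0 : 0 ≤ s := by rw [← hAx, ← norm2_sq]; positivity
  refine ⟨hs0, ?_, ?_⟩
  · have := pow_le_pow_left₀ (norm2_nonneg _) (hσ1.2.1 x) 2
    rwa [mul_pow, norm2_sq, norm2_sq, hx, hAx, mul_one] at this
  · rcases hs0.eq_or_lt with h | h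
    · exact Or.inl h.symm
    · right
      have := pow_le_pow_left₀ (mul_nonneg hσm.1 (norm2_nonneg _)) (hσm.2.1 (A *ᵥ x)) 2
      rw [mul_pow, norm2_sq, norm2_sq, hAx, Matrix.mulVec_mulVec, hs, smul_dotProduct,
        dotProduct_smul, hx, smul_eq_mul, smul_eq_mul, mul_one] at this
      exact le_of_mul_le_mul_right this h

/-- A matrix whose transpose is diagonal in an orthonormal basis, with entries bounded by `c`,
has spectral norm at most `c`. -/
theorem norm2_mulVec_le_of_basis {n : ℕ} (C : Matrix (Fin n) (Fin n) ℝ)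
    (b : OrthonormalBasis (Fin n) ℝ (EuclideanSpace ℝ (Fin n))) (f : Fin n → ℝ) (c : ℝ)
    (hc : 0 ≤ c) (hf : ∀ i, |f i| ≤ c) (hC : ∀ i, Cᵀ *ᵥ (b i).ofLp = f i • (b i).ofLp)
    (v : Fin n → ℝ) : norm2 (C *ᵥ v) ≤ c * norm2 v := by
  have hcoef : ∀ i, inner ℝ (b i) (WithLp.toLp 2 (C *ᵥ v))
      = f i * inner ℝ (b i) (WithLp.toLp 2 v) := fun i => by
    simp only [EuclideanSpace.inner_eq_star_dotProduct, star_trivial]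
    rw [dotProduct_comm, Matrix.dotProduct_mulVec, ← Matrix.mulVec_transpose, hC,
      smul_dotProduct, smul_eq_mul, dotProduct_comm]
  refine abs_le_of_sq_le_sq' ?_ (mul_nonneg hc (norm2_nonneg v)) |>.2
  rw [mul_pow, norm2_eq_norm, norm2_eq_norm, ← b.sum_sq_norm_inner_right,
    ← b.sum_sq_norm_inner_right, Finset.mul_sum]
  refine Finset.sum_le_sum fun i _ => ?_
  rw [hcoef, norm_mul, mul_pow]
  exact mul_le_mul_of_nonneg_right (pow_le_pow_left₀ (norm_nonneg _) (hf i) 2) (sq_nonneg _)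

/-- The contribution of `AᵀA - λ(AᵀA + εI)⁻¹AᵀA`, controlled by its eigenvalues. -/
theorem spectral_part {m n : ℕ} (A : Matrix (Fin m) (Fin n) ℝ)
    (σ1 σm : ℝ) (hσ1 : IsMaxSingularValue A σ1) (hσm : IsMinSingularValue A σm)
    (ε lam : ℝ) (hε : 0 < ε) (hlam : lam ≤ ε + σm ^ 2) (v : Fin n → ℝ) :
    norm2 ((Aᵀ * A - lam • ((Aᵀ * A + ε • (1 : Matrix (Fin n) (Fin n) ℝ))⁻¹ * (Aᵀ * A))) *ᵥ v) ≤
      (σ1 ^ 2 - lam * σ1 ^ 2 / (ε + σ1 ^ 2)) * norm2 v := by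
  set P := Aᵀ * A with hP
  set M := P + ε • (1 : Matrix (Fin n) (Fin n) ℝ) with hM
  have hPt : Pᵀ = P := by simp [hP]
  have hMt : Mᵀ = M := by simp [hM, hPt]
  have hherm : P.IsHermitian := by
    rw [Matrix.IsHermitian, Matrix.conjTranspose_eq_transpose_of_trivial, hPt]
  have hMdet : IsUnit M.det := by
    have hps : P.PosSemidef := by
      have := Matrix.posSemidef_conjTranspose_mul_self A
      rwa [Matrix.conjTranspose_eq_transpose_of_trivial] at this
    have hpd : M.PosDef := Matrix.PosDef.posSemidef_add hps (Matrix.PosDef.one.smul hε)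
    exact hpd.det_pos.ne'.isUnit
  -- For `σ1 = 0` the bound reads `0 ≤ 0`.
  have hc : 0 ≤ σ1 ^ 2 - lam * σ1 ^ 2 / (ε + σ1 ^ 2) := by
    rcases hσ1.1.eq_or_lt with h | h
    · simp [← h]
    · have := minSV_le_maxSV A σ1 σm hσ1 hσm h
      exact (filter_bound (sq_nonneg σ1) le_rfl hε (by linarith)).1
  have heig : ∀ i, P *ᵥ (hherm.eigenvectorBasis i).ofLp
      = hherm.eigenvalues i • (hherm.eigenvectorBasis i).ofLp :=
    fun i => hherm.mulVec_eigenvectorBasis i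
  have hunit : ∀ i, (hherm.eigenvectorBasis i).ofLp ⬝ᵥ (hherm.eigenvectorBasis i).ofLp = 1 :=
    fun i => by
      rw [← norm2_sq, norm2_eq_norm]
      simp
  have hb := fun i => eigen_bounds A σ1 σm hσ1 hσm _ _ (hunit i) (heig i)
  refine norm2_mulVec_le_of_basis _ hherm.eigenvectorBasis
    (fun i => hherm.eigenvalues i - lam * hherm.eigenvalues i / (ε + hherm.eigenvalues i)) _ hc
    (fun i => ?_) (fun i => ?_) v
  · obtain ⟨h0, h1, h2 | h2⟩ := hb i
    · simpa [h2] using hc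
    · obtain ⟨h3, h4⟩ := filter_bound h0 h1 hε (hlam.trans (by linarith))
      rwa [abs_of_nonneg h3]
  · have hpos : 0 < ε + hherm.eigenvalues i := by linarith [(hb i).1]
    have hx := heig i
    generalize (hherm.eigenvectorBasis i).ofLp = x at hx
    generalize hherm.eigenvalues i = s at hx hpos
    have hMx : M *ᵥ x = (ε + s) • x := by
      rw [hM, Matrix.add_mulVec, hx, Matrix.smul_mulVec, Matrix.one_mulVec, ← add_smul, add_comm]
    have hMi : M⁻¹ *ᵥ x = (ε + s)⁻¹ • x := by
      have h1 : x = (ε + s)⁻¹ • M *ᵥ x := by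
        rw [hMx, smul_smul, inv_mul_cancel₀ hpos.ne', one_smul]
      conv_lhs => rw [h1]
      rw [Matrix.mulVec_smul, Matrix.mulVec_mulVec, Matrix.nonsing_inv_mul _ hMdet,
        Matrix.one_mulVec]
    rw [Matrix.transpose_sub, Matrix.transpose_smul, Matrix.transpose_mul M⁻¹ P,
      Matrix.transpose_nonsing_inv, hMt, hPt, Matrix.sub_mulVec, Matrix.smul_mulVec,
      ← Matrix.mulVec_mulVec x P, hMi, Matrix.mulVec_smul, hx, smul_smul, smul_smul, ← sub_smul]
    congr 1
    field_simp


/-- Lemma 3.2, second inequality. -/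
theorem stmt_2 {m n : ℕ} (hmn : m ≤ n) (A : Matrix (Fin m) (Fin n) ℝ) (hA : A ≠ 0)
    (σ1 σm : ℝ) (hσ1 : IsMaxSingularValue A σ1) (hσm : IsMinSingularValue A σm)
    (t : ℕ) (ht : 0 < t) (δ : ℝ) (hδ : IsRIC A t δ)
    (ε lam : ℝ) (hε : σ1 ^ 2 < ε) (hlam0 : 0 ≤ lam) (hlam : lam ≤ ε + σm ^ 2)
    (v : Fin n → ℝ) (Ω : Set (Fin n)) (hsupp : (Ω ∪ supp v).ncard ≤ t) :
    norm2 (Ω.indicator (((1 : Matrix (Fin n) (Fin n) ℝ) -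
        lam • ((Aᵀ * A + ε • (1 : Matrix (Fin n) (Fin n) ℝ))⁻¹ * (Aᵀ * A))).mulVec v)) ≤
      (δ + σ1 ^ 2 - lam * σ1 ^ 2 / (ε + σ1 ^ 2)) * norm2 v := by
  have h1 := ric_part A t δ hδ v Ω hsupp
  have h2 := spectral_part A σ1 σm hσ1 hσm ε lam ((sq_nonneg σ1).trans_lt hε) hlam v
  set B := (Aᵀ * A + ε • (1 : Matrix (Fin n) (Fin n) ℝ))⁻¹ * (Aᵀ * A) with hB
  have hsplit : ((1 : Matrix (Fin n) (Fin n) ℝ) - lam • B) *ᵥ v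
      = (v - (Aᵀ * A) *ᵥ v) + (Aᵀ * A - lam • B) *ᵥ v := by
    simp only [Matrix.sub_mulVec, Matrix.one_mulVec]
    abel
  rw [hsplit, Set.indicator_add']
  calc _ ≤ _ := norm2_add_le _ _
    _ ≤ _ := add_le_add h1 ((norm2_indicator_le _ _).trans h2)
    _ = _ := by ring
end

section
/- Let k ≤ n be a positive integer, let z ∈ ℝ^n be arbitrary, and let x ∈ ℝ^n be k-sparse with S = supp(x). If w ∈ ℝ^n is a hard k-thresholding of z with associated index set S* (so S* = supp-set of w), then ‖w − x‖₂ ≤ √3 ‖(z − x)_{S ∪ S*}‖₂. -/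
/-!
Write `S = supp x`, and `S*` for the thresholding index set. On `S \ S*` the error is `-x i`, and
`x i ^ 2 ≤ 2 (z i - x i) ^ 2 + 2 z i ^ 2`. Since `|S| ≤ |S*|`, also `|S \ S*| ≤ |S* \ S|`, and every
entry of `z` on `S* \ S` dominates in modulus every entry on `S \ S*`; hence the energy of `z` on
`S \ S*` is at most that on `S* \ S`, where `z = z - x`. So the energy of `z - x` on `S* \ S` is
counted at most `1 + 2 = 3` times, which is where the constant `√3` comes from.
-/

open Matrix Filter Topology

/-- Both sums are compared with a multiple of the maximum of `f` on `T`. -/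
theorem sum_le_sum_of_card_le_of_dominated {ι : Type*} (T U : Finset ι) (f : ι → ℝ)
    (hf : ∀ i, 0 ≤ f i) (hc : T.card ≤ U.card) (hd : ∀ i ∈ U, ∀ j ∈ T, f j ≤ f i) :
    ∑ j ∈ T, f j ≤ ∑ i ∈ U, f i := by
  rcases T.eq_empty_or_nonempty with rfl | hT
  · simpa using Finset.sum_nonneg fun i _ => hf i
  · obtain ⟨m, hm, hmax⟩ := T.exists_max_image f hT
    calc ∑ j ∈ T, f j ≤ T.card • f m := Finset.sum_le_card_nsmul _ _ _ hmax
      _ ≤ U.card • f m := nsmul_le_nsmul_left (hf m) hc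
      _ ≤ ∑ i ∈ U, f i := Finset.card_nsmul_le_sum _ _ _ fun i hi => hd i hi m hm

/-- Lemma 3.3. -/
theorem stmt_3 {n : ℕ} (k : ℕ) (hk : 0 < k) (hkn : k ≤ n)
    (z x : Fin n → ℝ) (hx : (supp x).ncard ≤ k)
    (w : Fin n → ℝ) (Sstar : Set (Fin n))
    (hw : IsHardThresholding k z w Sstar) :
    norm2 (w - x) ≤ Real.sqrt 3 * norm2 ((supp x ∪ Sstar).indicator (z - x)) := by
  classical
  obtain ⟨hcard, hin, hout, hdom⟩ := hw
  have key : ∑ j ∈ (supp x \ Sstar).toFinset, z j ^ 2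
      ≤ ∑ i ∈ (Sstar \ supp x).toFinset, z i ^ 2 := by
    apply sum_le_sum_of_card_le_of_dominated _ _ (fun i => z i ^ 2) fun i => sq_nonneg _
    · rw [← Set.ncard_eq_toFinset_card', ← Set.ncard_eq_toFinset_card']
      exact (Set.ncard_le_ncard_iff_ncard_sdiff_le_ncard_sdiff
        (Set.toFinite _) (Set.toFinite _)).1 (hx.trans hcard.ge)
    · intro i hi j hj
      rw [Set.mem_toFinset] at hi hj
      exact sq_le_sq.2 (hdom i hi.1 j hj.2)
  have point : ∀ i, (w - x) i ^ 2 ≤ 3 * (supp x ∪ Sstar).indicator (z - x) i ^ 2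
      + 2 * (if i ∈ (supp x \ Sstar).toFinset then z i ^ 2 else 0)
      - 2 * (if i ∈ (Sstar \ supp x).toFinset then z i ^ 2 else 0) := by
    intro i
    by_cases h1 : i ∈ Sstar <;> by_cases h2 : i ∈ supp x
    · simp [h1, h2, hin i h1]
      nlinarith [sq_nonneg (z i - x i)]
    · have hx0 : x i = 0 := by simpa [supp] using h2
      simp [h1, h2, hin i h1, hx0]
      linarith
    · simp [h1, h2, hout i h1]
      -- `2 (z - x) ^ 2 + 2 z ^ 2 - x ^ 2 = (x - 2 z) ^ 2`
      nlinarith [sq_nonneg (x i - 2 * z i), sq_nonneg (z i - x i)]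
    · have hx0 : x i = 0 := by simpa [supp] using h2
      simp [h1, h2, hout i h1, hx0]
  have total := Finset.sum_le_sum fun i (_ : i ∈ Finset.univ) => point i
  rw [Finset.sum_sub_distrib, Finset.sum_add_distrib, ← Finset.mul_sum, ← Finset.mul_sum,
    ← Finset.mul_sum, Finset.sum_ite_mem, Finset.sum_ite_mem, Finset.univ_inter,
    Finset.univ_inter] at total
  unfold norm2
  rw [← Real.sqrt_mul (by norm_num)]
  exact Real.sqrt_le_sqrt (by linarith)
end

section
/- Let k ≤ n be a positive integer, let z ∈ ℝ^n be arbitrary, and let x ∈ ℝ^n be k-sparse with S = supp(x). If w ∈ ℝ^n is a hard k-thresholding of z with associated index set S*, then ‖z_{S \ S*}‖₂ ≤ ‖(z − x)_{S* \ S}‖₂. -/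
/-!
Since `x` has at most `k = |S*|` nonzero entries, `supp x \ S*` has at most as many elements as
`S* \ supp x`, so there is an injection of the former into the latter. Each entry of `z` on `S*`
dominates each entry off `S*` in absolute value, so comparing squares along this injection gives
the bound with `z` on the right, and `z = z - x` off `supp x`.
-/

open Matrix Filter Topology

/-- Summing the squares of a vector restricted to `A` is summing over the subtype `A`. -/
lemma sum_indicator_sq {n : ℕ} (A : Set (Fin n)) [Fintype A] (v : Fin n → ℝ) :
    ∑ i, (A.indicator v i) ^ 2 = ∑ a : A, v a ^ 2 := by
  classical
  have h (i : Fin n) : (A.indicator v i) ^ 2 = if i ∈ A then v i ^ 2 else 0 := by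
    by_cases hi : i ∈ A <;> simp [hi]
  simp_rw [h]
  rw [← Finset.sum_filter]
  exact Finset.sum_subtype _ (by simp) _

/-- first step in the proof of Lemma 3.3. -/
theorem stmt_4 {n : ℕ} (k : ℕ) (hk : 0 < k) (hkn : k ≤ n)
    (z x : Fin n → ℝ) (hx : (supp x).ncard ≤ k)
    (w : Fin n → ℝ) (Sstar : Set (Fin n))
    (hw : IsHardThresholding k z w Sstar) :
    norm2 ((supp x \ Sstar).indicator z) ≤
      norm2 ((Sstar \ supp x).indicator (z - x)) := by
  classical
  obtain ⟨hcard, -, -, hle⟩ := hw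
  have hc : (supp x \ Sstar).ncard ≤ (Sstar \ supp x).ncard :=
    (Set.ncard_le_ncard_iff_ncard_sdiff_le_ncard_sdiff).mp (hx.trans hcard.ge)
  rw [← Nat.card_coe_set_eq, ← Nat.card_coe_set_eq, Nat.card_eq_fintype_card,
    Nat.card_eq_fintype_card] at hc
  obtain ⟨f⟩ := Function.Embedding.nonempty_of_card_le hc
  refine Real.sqrt_le_sqrt ?_
  rw [sum_indicator_sq, sum_indicator_sq]
  calc ∑ a : ↥(supp x \ Sstar), z a ^ 2
      ≤ ∑ a : ↥(supp x \ Sstar), z (f a) ^ 2 :=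
        Finset.sum_le_sum fun a _ => sq_le_sq.mpr (hle _ (f a).2.1 _ a.2.2)
    _ = ∑ b ∈ Finset.univ.map f, z b ^ 2 := by rw [Finset.sum_map]
    _ ≤ ∑ b : ↥(Sstar \ supp x), z b ^ 2 :=
        Finset.sum_le_sum_of_subset_of_nonneg (Finset.subset_univ _)
          fun _ _ _ => sq_nonneg _
    _ = ∑ b : ↥(Sstar \ supp x), (z - x) b ^ 2 := by
        refine Finset.sum_congr rfl fun b _ => ?_
        have hb : x b = 0 := not_not.mp b.2.2
        simp [hb]
end
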